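/- Let u(x,y) = x·y·e^{y}·(x³ + y³ − x³e^{3y})^{−1/3} and v(x,y) = y, defined for real x, y with y ≠ 0 and x³ + y³ − x³e^{3y} > 0 (real cube root of a positive real). Then (u,v) satisfies the projective flow PDE for the vector field ϖ(x,y) = x⁴/y² + xy, ϱ(x,y) = 0: that is, u_x·(x⁴/y² + xy − x) + u_y·(0 − y) = −u at every such point, and trivially v_x·(ϖ−x) + v_y·(ϱ−y) = −v. -/

import Mathlib

/-- The first coordinate of the abelian type II flow `q(𝐱)`:
`u(x,y) = xy·e^y·(x³+y³-x³e^{3y})^{-1/3}`. -/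
noncomputable def uII (x y : ℝ) : ℝ :=
  x * y * Real.exp y * (x ^ 3 + y ^ 3 - x ^ 3 * Real.exp (3 * y)) ^ (-(1 : ℝ) / 3)

/-!
Write `L` for differentiation along `(ϖ - x, ϱ - y)`, so that the PDE for `u` reads `L u = -u`.
Each factor of `u` is an eigenfunction of `L` with a variable eigenvalue (its *cofactor*): with
`s = x³/y²`, the functions `x`, `y`, `e^y` and `D = x³ + y³ - x³e^{3y}` have cofactors `s + y - 1`,
`-1`, `-y` and `3(s - 1)`, where the last one rests on `y x³ = s y³`. Cofactors add under products
and scale under powers, so `xye^y D^{-1/3}` has cofactor `(s + y - 1) - 1 - y - (s - 1) = -1`.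
-/

section Cofactor

variable {𝕜 E : Type*} [NontriviallyNormedField 𝕜] [NormedAddCommGroup E] [NormedSpace 𝕜 E]

/-- `f` is differentiable at `p` and its derivative there in the direction `w` is `κ * f p`. When
`w` is the value at `p` of a vector field, `κ` is the value at `p` of the cofactor of `f` in the
sense of Darboux integrability. Dividing by `f p` would give the logarithmic derivative; the product
form also makes sense at the zeros of `f`. -/
def HasCofactorAt (f : E → 𝕜) (κ : 𝕜) (p w : E) : Prop :=
  DifferentiableAt 𝕜 f p ∧ fderiv 𝕜 f p w = κ * f p

namespace HasCofactorAt

variable {f g : E → 𝕜} {κ μ : 𝕜} {p w : E}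

theorem of_clm {L : E →L[𝕜] 𝕜} (h : L w = κ * L p) : HasCofactorAt (fun q => L q) κ p w :=
  ⟨L.differentiableAt, by rw [L.fderiv, h]⟩

theorem const_mul (hf : HasCofactorAt f κ p w) (c : 𝕜) :
    HasCofactorAt (fun q => c * f q) κ p w := by
  refine ⟨hf.1.const_mul c, ?_⟩
  rw [fderiv_const_mul hf.1, smul_apply, hf.2, smul_eq_mul, mul_left_comm]

theorem mul (hf : HasCofactorAt f κ p w) (hg : HasCofactorAt g μ p w) :
    HasCofactorAt (fun q => f q * g q) (κ + μ) p w := by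
  refine ⟨hf.1.mul hg.1, ?_⟩
  rw [fderiv_fun_mul hf.1 hg.1]
  simp only [add_apply, smul_apply, smul_eq_mul, hf.2, hg.2]
  ring

theorem pow (hf : HasCofactorAt f κ p w) (n : ℕ) :
    HasCofactorAt (fun q => f q ^ n) (n * κ) p w := by
  induction n with
  | zero => simp [HasCofactorAt]
  | succ n ih => simpa only [pow_succ, Nat.cast_succ, add_one_mul] using ih.mul hf

theorem deriv_mul_add_deriv_mul {f : 𝕜 × 𝕜 → 𝕜} {x y a b : 𝕜}
    (hf : HasCofactorAt f κ (x, y) (a, b)) :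
    deriv (fun t => f (t, y)) x * a + deriv (fun t => f (x, t)) y * b = κ * f (x, y) := by
  have hfst : HasDerivAt (fun t => f (t, y)) (fderiv 𝕜 f (x, y) (1, 0)) x :=
    hf.1.hasFDerivAt.comp_hasDerivAt x ((hasDerivAt_id x).prodMk (hasDerivAt_const x y))
  have hsnd : HasDerivAt (fun t => f (x, t)) (fderiv 𝕜 f (x, y) (0, 1)) y :=
    hf.1.hasFDerivAt.comp_hasDerivAt y ((hasDerivAt_const y x).prodMk (hasDerivAt_id y))
  have hab : (a, b) = a • ((1, 0) : 𝕜 × 𝕜) + b • ((0, 1) : 𝕜 × 𝕜) := by simp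
  rw [hfst.deriv, hsnd.deriv, ← hf.2, hab, map_add, map_smul, map_smul, smul_eq_mul, smul_eq_mul,
    mul_comm, mul_comm b]

end HasCofactorAt

end Cofactor

namespace HasCofactorAt

variable {E : Type*} [NormedAddCommGroup E] [NormedSpace ℝ E] {f : E → ℝ} {κ : ℝ} {p w : E}

theorem exp (hf : HasCofactorAt f κ p w) :
    HasCofactorAt (fun q => Real.exp (f q)) (κ * f p) p w := by
  refine ⟨hf.1.exp, ?_⟩
  rw [fderiv_exp hf.1, smul_apply, hf.2, smul_eq_mul, mul_comm]

theorem rpow_const (hf : HasCofactorAt f κ p w) (hp : f p ≠ 0) (r : ℝ) :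
    HasCofactorAt (fun q => f q ^ r) (r * κ) p w := by
  have h := hf.1.hasFDerivAt.rpow_const (p := r) (Or.inl hp)
  refine ⟨h.differentiableAt, ?_⟩
  rw [h.fderiv, smul_apply, hf.2, smul_eq_mul, Real.rpow_sub_one hp]
  field_simp

end HasCofactorAt

section TypeII

/-- The direction `(ϖ(x,y) - x, ϱ(x,y) - y)` of differentiation in the projective flow PDE, for
`ϖ(x,y) = x⁴/y² + xy` and `ϱ = 0`. -/
noncomputable def typeIIDirection (x y : ℝ) : ℝ × ℝ :=
  (x ^ 4 / y ^ 2 + x * y - x, 0 - y)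

variable (x y : ℝ)

theorem hasCofactorAt_fst_typeIIDirection :
    HasCofactorAt (fun q : ℝ × ℝ => q.1) (x ^ 3 / y ^ 2 + y - 1) (x, y) (typeIIDirection x y) :=
  .of_clm (L := .fst ℝ ℝ ℝ) (by simp only [typeIIDirection, ContinuousLinearMap.coe_fst']; ring)

theorem hasCofactorAt_snd_typeIIDirection :
    HasCofactorAt (fun q : ℝ × ℝ => q.2) (-1) (x, y) (typeIIDirection x y) :=
  .of_clm (L := .snd ℝ ℝ ℝ) (by simp [typeIIDirection])

variable {y}

theorem hasCofactorAt_radicand_typeIIDirection (hy : y ≠ 0) :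
    HasCofactorAt (fun q : ℝ × ℝ => q.1 ^ 3 + q.2 ^ 3 - q.1 ^ 3 * Real.exp (3 * q.2))
      (3 * (x ^ 3 / y ^ 2 - 1)) (x, y) (typeIIDirection x y) := by
  have hx3 := (hasCofactorAt_fst_typeIIDirection x y).pow 3
  have hy3 := (hasCofactorAt_snd_typeIIDirection x y).pow 3
  have hxe := hx3.mul ((hasCofactorAt_snd_typeIIDirection x y).const_mul 3).exp
  have hadd := hx3.1.fun_add hy3.1
  have hs : y * x ^ 3 = x ^ 3 / y ^ 2 * y ^ 3 := by field_simp
  refine ⟨hadd.fun_sub hxe.1, ?_⟩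
  rw [fderiv_fun_sub hadd hxe.1, fderiv_fun_add hx3.1 hy3.1]
  simp only [sub_apply, add_apply, hx3.2, hy3.2, hxe.2]
  push_cast
  linear_combination 3 * hs

theorem hasCofactorAt_uII (hy : y ≠ 0) (hD : x ^ 3 + y ^ 3 - x ^ 3 * Real.exp (3 * y) ≠ 0) :
    HasCofactorAt (fun q : ℝ × ℝ => uII q.1 q.2) (-1) (x, y) (typeIIDirection x y) := by
  have hfst := hasCofactorAt_fst_typeIIDirection x y
  have hsnd := hasCofactorAt_snd_typeIIDirection x y
  have hroot := (hasCofactorAt_radicand_typeIIDirection x hy).rpow_const hD (-(1 : ℝ) / 3)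
  have hsum :
      x ^ 3 / y ^ 2 + y - 1 + -1 + -1 * y + -(1 : ℝ) / 3 * (3 * (x ^ 3 / y ^ 2 - 1)) = -1 := by
    ring
  rw [← hsum]
  exact ((hfst.mul hsnd).mul hsnd.exp).mul hroot

end TypeII

/-- `(u, v) = (xy·e^y·(x³+y³-x³e^{3y})^{-1/3}, y)` satisfies the projective flow
PDE for the vector field `ϖ(x,y) = x⁴/y² + xy`, `ϱ(x,y) = 0`. -/
theorem typeII_flow_satisfies_PDE (x y : ℝ) (hy : y ≠ 0)
    (hpos : x ^ 3 + y ^ 3 - x ^ 3 * Real.exp (3 * y) > 0) :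
    deriv (fun t => uII t y) x * (x ^ 4 / y ^ 2 + x * y - x) +
      deriv (fun t => uII x t) y * (0 - y) = -uII x y ∧
    deriv (fun t => (fun _ s => s) t y : ℝ → ℝ) x * (x ^ 4 / y ^ 2 + x * y - x) +
      deriv (fun t => (fun _ s => s) x t : ℝ → ℝ) y * (0 - y) = -y := by
  exact ⟨by simpa only [neg_one_mul] using
      (hasCofactorAt_uII x hy hpos.ne').deriv_mul_add_deriv_mul,
    by simpa only [neg_one_mul] using
      (hasCofactorAt_snd_typeIIDirection x y).deriv_mul_add_deriv_mul⟩
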